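/- Let (A,I) be a perfect local pair, and let (H,J) together with φ:(A,I)→(H,J) be a left Henselization of (A,I). Then (H,J) is a local pair: H is a local ring and J is its maximal ideal, i.e. J equals the set of nonunits of H. -/

import Mathlib

open Polynomial

universe u

/-- A morphism of pairs `(A,I) → (B,J)`: a ring homomorphism `φ : A → B` with
`φ ⁻¹(J) = I`. -/
def IsPairHom {A B : Type*} [Ring A] [Ring B] (I : TwoSidedIdeal A)
    (J : TwoSidedIdeal B) (φ : A →+* B) : Prop :=
  ∀ a : A, φ a ∈ J ↔ a ∈ I

/-- The commutator filtration of the pair `(A,I)`, indexed from `0`: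
`commFilt I 0 = I^(1) = I` and `commFilt I (n+1) = I^(n+2)` is the two-sided ideal
generated by the commutators `[A, I^(n+1)]`. -/
def commFilt {A : Type*} [Ring A] (I : TwoSidedIdeal A) : ℕ → TwoSidedIdeal A
  | 0 => I
  | n + 1 => TwoSidedIdeal.span {x | ∃ a b : A, b ∈ commFilt I n ∧ x = a * b - b * a}

/-- A pair `(A,I)` is perfect if the intersection of its commutator filtration is `{0}`. -/
def IsPerfectPair {A : Type*} [Ring A] (I : TwoSidedIdeal A) : Prop :=
  ∀ x : A, (∀ n, x ∈ commFilt I n) → x = 0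

/-- A pair `(A,I)` is a Jacobson pair if `I` is contained in the Jacobson radical of `A`;
for a two-sided ideal this is equivalent to `1 + a` being a unit for every `a ∈ I`. -/
def IsJacobsonPair {A : Type*} [Ring A] (I : TwoSidedIdeal A) : Prop :=
  ∀ a ∈ I, IsUnit (1 + a)

/-- `f₁, f₂ ∈ A[x]` are left coprime: `A[x]f₁ + A[x]f₂ = A[x]`, equivalently there are
`g₁, g₂` with `g₁f₁ + g₂f₂ = 1`. -/
def LeftCoprime {A : Type*} [Semiring A] (f1 f2 : A[X]) : Prop :=
  ∃ g1 g2 : A[X], g1 * f1 + g2 * f2 = 1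

/-- A pair `(A,I)` is left Henselian: it is a Jacobson pair, and every factorization of
the reduction of a monic polynomial into left coprime monic factors lifts uniquely. -/
def IsLeftHenselianPair {A : Type*} [Ring A] (I : TwoSidedIdeal A) : Prop :=
  IsJacobsonPair I ∧
  ∀ F : A[X], F.Monic →
    ∀ f1 f2 : (I.ringCon.Quotient)[X], f1.Monic → f2.Monic → LeftCoprime f1 f2 →
      F.map (I.ringCon.mk') = f1 * f2 →
      ∃! p : A[X] × A[X], p.1.Monic ∧ p.2.Monic ∧ F = p.1 * p.2 ∧
        p.1.map I.ringCon.mk' = f1 ∧ p.2.map I.ringCon.mk' = f2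

/-- A ring homomorphism is local if it sends every nonunit to a nonunit. -/
def RingHomIsLocal {A B : Type*} [Ring A] [Ring B] (φ : A →+* B) : Prop :=
  ∀ a : A, ¬ IsUnit a → ¬ IsUnit (φ a)

/-- `φ : (A,I) → (H,J)` is a left Henselization of the perfect pair `(A,I)`:
`(H,J)` is a perfect left Henselian pair and every morphism of pairs from `(A,I)` to a
perfect left Henselian pair factors uniquely through `φ`. -/
def IsLeftHenselization {A H : Type u} [Ring A] [Ring H] (I : TwoSidedIdeal A)
    (J : TwoSidedIdeal H) (φ : A →+* H) : Prop :=
  IsPairHom I J φ ∧ IsPerfectPair J ∧ IsLeftHenselianPair J ∧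
  ∀ (B : Type u) (_ : Ring B) (K : TwoSidedIdeal B) (ψ0 : A →+* B),
    IsPairHom I K ψ0 → IsPerfectPair K → IsLeftHenselianPair K →
    ∃! ψ : H →+* B, IsPairHom J K ψ ∧ ψ0 = ψ.comp φ

/-!
Let `S ⊆ H` be the subring of elements congruent modulo `J` to an element of `φ(A)`. Since `S`
contains `J`, the pair `(S, J)` inherits perfectness and the left Henselian property from `(H, J)`,
so the universal property yields a morphism `H → S` over `A`; followed by the inclusion it is the
identity of `H`, whence `S = H`. Therefore `A/I → H/J` is an isomorphism. If `A/I` is a division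
ring, so is `H/J`, and as units lift along the Jacobson pair `(H, J)`, the nonunits of `H` are
exactly the elements of `J`.
-/

section LocalPairs

variable {A : Type*} [Ring A] {I : TwoSidedIdeal A}

theorem ringCon_mk'_eq_zero_iff {a : A} : I.ringCon.mk' a = 0 ↔ a ∈ I := by
  rw [← TwoSidedIdeal.mem_ker, TwoSidedIdeal.ker_ringCon_mk']

theorem ringCon_mk'_eq_mk'_iff {a b : A} : I.ringCon.mk' a = I.ringCon.mk' b ↔ a - b ∈ I := by
  rw [← sub_eq_zero, ← map_sub, ringCon_mk'_eq_zero_iff]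

theorem IsJacobsonPair.isUnit_of_sub_one_mem (hI : IsJacobsonPair I) {a : A} (ha : a - 1 ∈ I) :
    IsUnit a := by
  simpa using hI (a - 1) ha

theorem IsJacobsonPair.isUnit_mk'_iff (hI : IsJacobsonPair I) {a : A} :
    IsUnit (I.ringCon.mk' a) ↔ IsUnit a := by
  refine ⟨fun h => ?_, fun h => h.map _⟩
  obtain ⟨y, hay, hya⟩ := isUnit_iff_exists.1 h
  obtain ⟨b, rfl⟩ := I.ringCon.mk'_surjective y
  rw [← map_mul, ← map_one I.ringCon.mk', ringCon_mk'_eq_mk'_iff] at hay hya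
  obtain ⟨c, hc⟩ := (hI.isUnit_of_sub_one_mem hay).exists_right_inv
  obtain ⟨d, hd⟩ := (hI.isUnit_of_sub_one_mem hya).exists_left_inv
  exact isUnit_iff_exists_and_exists.2
    ⟨⟨b * c, by rw [← mul_assoc, hc]⟩, ⟨d * b, by rw [mul_assoc, hd]⟩⟩

theorem IsJacobsonPair.forall_isUnit_iff_ne_zero_iff (hI : IsJacobsonPair I) :
    (∀ x : I.ringCon.Quotient, IsUnit x ↔ x ≠ 0) ↔ ∀ a : A, a ∈ I ↔ ¬ IsUnit a := by
  simp only [I.ringCon.mk'_surjective.forall, hI.isUnit_mk'_iff, ne_eq, ringCon_mk'_eq_zero_iff,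
    iff_not_comm]

theorem isJacobsonPair_of_mem_iff_not_isUnit (hI : ∀ a : A, a ∈ I ↔ ¬ IsUnit a) :
    IsJacobsonPair I := by
  intro a ha
  by_contra h
  have one_mem : (1 : A) ∈ I := by simpa using I.sub_mem ((hI (1 + a)).2 h) ha
  exact (hI 1).1 one_mem isUnit_one

theorem isLocalRing_of_mem_iff_not_isUnit (hI : ∀ a : A, a ∈ I ↔ ¬ IsUnit a) :
    IsLocalRing A := by
  have : Nontrivial A := not_subsingleton_iff_nontrivial.1 fun _ =>
    (hI 0).1 I.zero_mem (isUnit_of_subsingleton 0)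
  refine .of_nonunits_add fun a b ha hb => ?_
  exact (hI _).1 (I.add_mem ((hI a).2 ha) ((hI b).2 hb))

end LocalPairs

theorem LeftCoprime.map {R S : Type*} [Semiring R] [Semiring S] {f g : R[X]}
    (h : LeftCoprime f g) (φ : R →+* S) : LeftCoprime (f.map φ) (g.map φ) := by
  obtain ⟨p, q, hpq⟩ := h
  exact ⟨p.map φ, q.map φ, by simp only [← Polynomial.map_mul, ← Polynomial.map_add, hpq,
    Polynomial.map_one]⟩

section PairHoms

variable {A B : Type*} [Ring A] [Ring B] {I : TwoSidedIdeal A} {J : TwoSidedIdeal B} {φ : A →+* B}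

theorem commFilt_le_comap (h : I ≤ J.comap φ) (n : ℕ) :
    commFilt I n ≤ (commFilt J n).comap φ := by
  induction n with
  | zero => exact h
  | succ n ih =>
    rw [commFilt, TwoSidedIdeal.span_le]
    rintro _ ⟨a, b, hb, rfl⟩
    refine (TwoSidedIdeal.mem_comap φ).2 (TwoSidedIdeal.subset_span ⟨φ a, φ b, ?_, by simp⟩)
    exact (TwoSidedIdeal.mem_comap φ).1 (ih hb)

theorem IsPerfectPair.of_injective (hJ : IsPerfectPair J) (hφ : Function.Injective φ)
    (h : I ≤ J.comap φ) : IsPerfectPair I := fun x hx =>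
  (map_eq_zero_iff φ hφ).1 <| hJ (φ x) fun n =>
    (TwoSidedIdeal.mem_comap φ).1 (commFilt_le_comap h n (hx n))

theorem isPairHom_comap : IsPairHom (J.comap φ) J φ := fun _ =>
  (TwoSidedIdeal.mem_comap φ).symm

namespace IsPairHom

theorem ringCon_eq_ker (h : IsPairHom I J φ) :
    I.ringCon = RingCon.ker (J.ringCon.mk'.comp φ) := by
  ext a b
  rw [RingCon.ker_apply, RingHom.comp_apply, RingHom.comp_apply, ringCon_mk'_eq_mk'_iff,
    ← map_sub, h, TwoSidedIdeal.rel_iff]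

/-- The ring homomorphism `A/I → B/J` induced by a morphism of pairs `(A,I) → (B,J)`. -/
def quotientMap (h : IsPairHom I J φ) : I.ringCon.Quotient →+* J.ringCon.Quotient :=
  I.ringCon.lift (J.ringCon.mk'.comp φ) h.ringCon_eq_ker.le

theorem quotientMap_mk' (h : IsPairHom I J φ) (a : A) :
    h.quotientMap (I.ringCon.mk' a) = J.ringCon.mk' (φ a) :=
  rfl

theorem quotientMap_injective (h : IsPairHom I J φ) : Function.Injective h.quotientMap :=
  RingCon.lift_injective_iff.2 h.ringCon_eq_ker

theorem map_quotientMap_map_mk' (h : IsPairHom I J φ) (F : A[X]) :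
    (F.map I.ringCon.mk').map h.quotientMap = (F.map φ).map J.ringCon.mk' := by
  rw [Polynomial.map_map, Polynomial.map_map]
  rfl

theorem mem_range_of_mk'_eq_quotientMap (h : IsPairHom I J φ) (hJ : (J : Set B) ⊆ φ.range)
    {b : B} {x : I.ringCon.Quotient} (hb : J.ringCon.mk' b = h.quotientMap x) : b ∈ φ.range := by
  obtain ⟨a, rfl⟩ := I.ringCon.mk'_surjective x
  rw [h.quotientMap_mk', ringCon_mk'_eq_mk'_iff] at hb
  simpa using add_mem (hJ hb) (φ.mem_range_self a)

theorem exists_monic_map_eq (h : IsPairHom I J φ) (hφ : Function.Injective φ)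
    (hJ : (J : Set B) ⊆ φ.range) {G : B[X]} {g : I.ringCon.Quotient[X]} (hG : G.Monic)
    (hGg : G.map J.ringCon.mk' = g.map h.quotientMap) :
    ∃ F : A[X], F.Monic ∧ F.map φ = G ∧ F.map I.ringCon.mk' = g := by
  have coeff_mem (n : ℕ) : G.coeff n ∈ φ.range :=
    h.mem_range_of_mk'_eq_quotientMap hJ (x := g.coeff n) <| by
      rw [← Polynomial.coeff_map, hGg, Polynomial.coeff_map]
  obtain ⟨F, rfl⟩ := (Polynomial.mem_lifts G).1 ((Polynomial.lifts_iff_coeff_lifts G).2 coeff_mem)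
  refine ⟨F, Polynomial.monic_of_injective hφ hG, rfl, ?_⟩
  apply Polynomial.map_injective _ h.quotientMap_injective
  rw [map_quotientMap_map_mk', hGg]

end IsPairHom

theorem IsJacobsonPair.of_injective (hB : IsJacobsonPair J) (h : IsPairHom I J φ)
    (hφ : Function.Injective φ) (hJ : (J : Set B) ⊆ φ.range) : IsJacobsonPair I := by
  intro a ha
  have ha' : φ a ∈ J := (h a).2 ha
  obtain ⟨b, hab, hba⟩ := isUnit_iff_exists.1 (hB (φ a) ha')
  have b_eq : b = 1 - φ a * b := by
    rw [eq_sub_iff_add_eq, ← hab, add_mul, one_mul]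
  obtain ⟨c, rfl⟩ : b ∈ φ.range := by
    rw [b_eq]
    exact sub_mem (one_mem _) (hJ (J.mul_mem_right _ _ ha'))
  refine isUnit_iff_exists.2 ⟨c, hφ ?_, hφ ?_⟩
  · simpa using hab
  · simpa using hba

theorem IsLeftHenselianPair.of_injective (hB : IsLeftHenselianPair J) (h : IsPairHom I J φ)
    (hφ : Function.Injective φ) (hJ : (J : Set B) ⊆ φ.range) : IsLeftHenselianPair I := by
  refine ⟨hB.1.of_injective h hφ hJ, fun F hF f₁ f₂ hf₁ hf₂ hcop hfac => ?_⟩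
  obtain ⟨⟨P₁, P₂⟩, ⟨hP₁, hP₂, hP, hPf₁, hPf₂⟩, hunique⟩ :=
    hB.2 (F.map φ) (hF.map φ) (f₁.map h.quotientMap) (f₂.map h.quotientMap) (hf₁.map _)
      (hf₂.map _) (hcop.map _) (by rw [← h.map_quotientMap_map_mk', hfac, Polynomial.map_mul])
  obtain ⟨F₁, hF₁, rfl, hFf₁⟩ := h.exists_monic_map_eq hφ hJ hP₁ hPf₁
  obtain ⟨F₂, hF₂, rfl, hFf₂⟩ := h.exists_monic_map_eq hφ hJ hP₂ hPf₂
  have map_inj := Polynomial.map_injective φ hφ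
  refine ⟨(F₁, F₂), ⟨hF₁, hF₂, map_inj (hP.trans (Polynomial.map_mul φ).symm), hFf₁, hFf₂⟩, ?_⟩
  rintro ⟨Q₁, Q₂⟩ ⟨hQ₁, hQ₂, rfl, rfl, rfl⟩
  have hQ := hunique (Q₁.map φ, Q₂.map φ) ⟨hQ₁.map φ, hQ₂.map φ, Polynomial.map_mul φ,
    (h.map_quotientMap_map_mk' Q₁).symm, (h.map_quotientMap_map_mk' Q₂).symm⟩
  exact Prod.ext (map_inj (congrArg Prod.fst hQ)) (map_inj (congrArg Prod.snd hQ))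

end PairHoms

namespace IsLeftHenselization

variable {A H : Type u} [Ring A] [Ring H] {I : TwoSidedIdeal A} {J : TwoSidedIdeal H} {φ : A →+* H}

theorem subring_eq_top (hH : IsLeftHenselization I J φ) {S : Subring H} (hφS : φ.range ≤ S)
    (hJS : (J : Set H) ⊆ S) : S = ⊤ := by
  obtain ⟨hφ, hperf, hhens, huniv⟩ := hH
  have hS : IsPairHom (J.comap S.subtype) J S.subtype := isPairHom_comap
  have hJrange : (J : Set H) ⊆ S.subtype.range := by rwa [Subring.range_subtype]
  let φS : A →+* S := φ.codRestrict S fun a => hφS (φ.mem_range_self a)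
  obtain ⟨ψ, ⟨hψ, hψφ⟩, -⟩ := huniv S inferInstance (J.comap S.subtype) φS
    (fun a => (hS (φS a)).symm.trans (hφ a))
    (hperf.of_injective S.subtype_injective le_rfl)
    (hhens.of_injective hS S.subtype_injective hJrange)
  have retract : S.subtype.comp ψ = RingHom.id H :=
    (huniv H inferInstance J φ hφ hperf hhens).unique
      ⟨fun a => (hS (ψ a)).trans (hψ a), by rw [RingHom.comp_assoc, ← hψφ]; rfl⟩
      ⟨fun _ => Iff.rfl, rfl⟩
  refine (Subring.eq_top_iff' S).2 fun x => ?_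
  have hx : (ψ x : H) = x := RingHom.congr_fun retract x
  exact hx ▸ (ψ x).2

theorem mk'_comp_surjective (hH : IsLeftHenselization I J φ) :
    Function.Surjective (J.ringCon.mk'.comp φ) := by
  let S : Subring H := (J.ringCon.mk'.comp φ).range.comap J.ringCon.mk'
  have hS : S = ⊤ := by
    refine hH.subring_eq_top ?_ fun x hx => ?_
    · rintro _ ⟨a, rfl⟩
      exact ⟨a, rfl⟩
    · exact ⟨0, by rw [map_zero, ringCon_mk'_eq_zero_iff.2 hx]⟩
  exact J.ringCon.mk'_surjective.forall.2 fun x => (hS ▸ Subring.mem_top x : x ∈ S)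

theorem quotientMap_bijective (hH : IsLeftHenselization I J φ) :
    Function.Bijective hH.1.quotientMap :=
  ⟨hH.1.quotientMap_injective, RingCon.lift_surjective_iff.2 hH.mk'_comp_surjective⟩

end IsLeftHenselization

theorem leftHenselization_local_general {A H : Type u} [Ring A] [Ring H]
    {I : TwoSidedIdeal A} {J : TwoSidedIdeal H} {φ : A →+* H}
    (hI : ∀ x : I.ringCon.Quotient, IsUnit x ↔ x ≠ 0) (hH : IsLeftHenselization I J φ) :
    IsLocalRing H ∧ ∀ a : H, a ∈ J ↔ ¬ IsUnit a := by
  let e := RingEquiv.ofBijective hH.1.quotientMap hH.quotientMap_bijective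
  have hJ : ∀ y : J.ringCon.Quotient, IsUnit y ↔ y ≠ 0 :=
    e.surjective.forall.2 fun x => by rw [MulEquiv.isUnit_map, hI, map_ne_zero_iff e e.injective]
  have hlocal := hH.2.2.1.1.forall_isUnit_iff_ne_zero_iff.1 hJ
  exact ⟨isLocalRing_of_mem_iff_not_isUnit hlocal, hlocal⟩

/-- Proposition `NHensellocal`: the left Henselization of a perfect local
pair is a local pair. -/
theorem leftHenselization_local {A H : Type u} [Ring A] [Ring H]
    (I : TwoSidedIdeal A) (J : TwoSidedIdeal H) (φ : A →+* H)
    (hperf : IsPerfectPair I)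
    (hlocal : ∀ a : A, a ∈ I ↔ ¬ IsUnit a)
    (hH : IsLeftHenselization I J φ) :
    IsLocalRing H ∧ ∀ a : H, a ∈ J ↔ ¬ IsUnit a :=
  leftHenselization_local_general
    ((isJacobsonPair_of_mem_iff_not_isUnit hlocal).forall_isUnit_iff_ne_zero_iff.2 hlocal) hH
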